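/- Every 3-dimensional linear subspace W of ℝ^6 on which the Klein quadratic form Ω vanishes identically is of exactly one of the following two types: either there exists a nonzero y ∈ ℝ^4 with W = { p(y,z) : z ∈ ℝ^4 } (a bundle of lines), or there exists a nonzero u ∈ ℝ^4 with W = { p(x,y) : uᵀx = 0 and uᵀy = 0 } (a field of lines). In other words, the two-dimensional projective subspaces contained in Klein's quadric are precisely the Klein images of bundles of lines and fields of lines. -/

import Mathlib

open Matrix

/-- The Plücker coordinate vector `(p01, p02, p03, p23, p31, p12)` of the
pair `x, y ∈ ℝ⁴`. -/
def pluck (x y : Fin 4 → ℝ) : Fin 6 → ℝ :=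
  ![x 0 * y 1 - x 1 * y 0, x 0 * y 2 - x 2 * y 0, x 0 * y 3 - x 3 * y 0,
    x 2 * y 3 - x 3 * y 2, x 3 * y 1 - x 1 * y 3, x 1 * y 2 - x 2 * y 1]

/-- The Klein quadratic form `Ω(p) = p01*p23 + p02*p31 + p03*p12` on `ℝ⁶`. -/
def kleinForm (p : Fin 6 → ℝ) : ℝ :=
  p 0 * p 3 + p 1 * p 4 + p 2 * p 5

/-!
Identify `p ∈ K⁶` with its skew Plücker matrix `M p`, and let `M⋆ p` be the matrix of the Hodge dual
of `p`. Since `M p * M⋆ p = M⋆ p * M p = -Ω(p) • 1`, the pair `(M, M⋆)` is a Clifford action of the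
Klein form on `K⁴ ⊕ K⁴`, and vectors of a totally isotropic `W` anticommute and square to zero.
For `W` spanned by three vectors an alternating product of four factors from this spanning set
repeats a factor and vanishes, so the image of a longest nonvanishing product is annihilated by all
of `W`: some nonzero `y` is killed by every `M⋆ p`, or some nonzero `u` by every `M p`. The first
says that `y` divides every `p ∈ W`, so `W = y ∧ K⁴` by dimension; the second says the same about
the Hodge dual of `W`, which makes `W` the field of lines in the plane `u`.
-/

section CommonKernel

variable {R V S T : Type*} [CommRing R] [AddCommGroup V] [Module R V]
  [AddCommGroup S] [Module R S] [AddCommGroup T] [Module R T]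

lemma apply_apply_eq_neg_apply_apply {A : V →ₗ[R] S →ₗ[R] T} {B : V →ₗ[R] T →ₗ[R] S}
    (hAB : ∀ v t, A v (B v t) = 0) (v w : V) (t : T) : A v (B w t) = -A w (B v t) := by
  have h := hAB (v + w) t
  simp only [map_add, LinearMap.add_apply, hAB, zero_add, add_zero] at h
  exact eq_neg_of_add_eq_zero_right h

lemma fourfold_apply_eq_zero {A : V →ₗ[R] S →ₗ[R] T} {B : V →ₗ[R] T →ₗ[R] S}
    (hAB : ∀ v t, A v (B v t) = 0) (hBA : ∀ v s, B v (A v s) = 0)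
    (b : Fin 3 → V) (i j k l : Fin 3) (t : T) : A (b i) (B (b j) (A (b k) (B (b l) t))) = 0 := by
  have swapAB := apply_apply_eq_neg_apply_apply hAB
  have swapBA := apply_apply_eq_neg_apply_apply hBA
  have pigeonhole : i = j ∨ j = k ∨ k = l ∨ i = k ∨ j = l ∨ i = l := by omega
  rcases pigeonhole with rfl | rfl | rfl | rfl | rfl | rfl
  · exact hAB _ _
  · rw [hBA, map_zero]
  · rw [hAB, map_zero, map_zero]
  · rw [swapBA, map_neg, hAB, neg_zero]
  · rw [swapAB (b k), map_neg, hBA, neg_zero, map_zero]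
  · rw [swapAB, swapAB (b k), map_neg, hBA, neg_zero, map_zero, neg_zero]

theorem exists_ne_zero_forall_apply_eq_zero (b : Module.Basis (Fin 3) R V)
    {A : V →ₗ[R] S →ₗ[R] T} {B : V →ₗ[R] T →ₗ[R] S}
    (hAB : ∀ v t, A v (B v t) = 0) (hBA : ∀ v s, B v (A v s) = 0) (hB : B ≠ 0) :
    (∃ t, t ≠ 0 ∧ ∀ v, B v t = 0) ∨ ∃ s, s ≠ 0 ∧ ∀ v, A v s = 0 := by
  have extendA {s : S} (hs : ∀ i, A (b i) s = 0) (v : V) : A v s = 0 :=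
    LinearMap.congr_fun (b.ext hs : A.flip s = 0) v
  have extendB {t : T} (ht : ∀ i, B (b i) t = 0) (v : V) : B v t = 0 :=
    LinearMap.congr_fun (b.ext ht : B.flip t = 0) v
  by_cases hBAB : ∃ i j k t, B (b i) (A (b j) (B (b k) t)) ≠ 0
  · obtain ⟨i, j, k, t, ht⟩ := hBAB
    exact .inr ⟨_, ht, extendA fun l => fourfold_apply_eq_zero hAB hBA b l i j k t⟩
  push Not at hBAB
  by_cases hAB' : ∃ j k t, A (b j) (B (b k) t) ≠ 0
  · obtain ⟨j, k, t, ht⟩ := hAB'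
    exact .inl ⟨_, ht, extendB fun i => hBAB i j k t⟩
  push Not at hAB'
  obtain ⟨k, hk⟩ : ∃ k, B (b k) ≠ 0 := by
    by_contra! h
    exact hB (b.ext h)
  obtain ⟨t, ht⟩ := DFunLike.ne_iff.mp hk
  exact .inr ⟨_, ht, extendA fun j => hAB' j k t⟩

end CommonKernel

lemma eq_zero_or_eq_zero_of_dotProduct_smul_eq {ι R : Type*} [Fintype ι] [Nontrivial ι]
    [CommSemiring R] [NoZeroDivisors R] {u y : ι → R} (h : ∀ z, (u ⬝ᵥ z) • y = (u ⬝ᵥ y) • z) :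
    u = 0 ∨ y = 0 := by
  classical
  have entry (i k : ι) : u i * y k = (u ⬝ᵥ y) * (Pi.single i 1 : ι → R) k := by
    simpa using congrFun (h (Pi.single i 1)) k
  have diagonal (i : ι) : u i * y i = u ⬝ᵥ y := by simpa using entry i i
  have off_diagonal {i k : ι} (hik : i ≠ k) : u i * y k = 0 := by
    rw [entry, Pi.single_eq_of_ne hik.symm, mul_zero]
  obtain ⟨i, j, hij⟩ := exists_pair_ne ι
  have huy : u ⬝ᵥ y = 0 := mul_self_eq_zero.mp <| calc
    (u ⬝ᵥ y) * (u ⬝ᵥ y) = (u i * y i) * (u j * y j) := by rw [diagonal, diagonal]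
    _ = (u i * y j) * (u j * y i) := by ring
    _ = 0 := by rw [off_diagonal hij, zero_mul]
  by_contra! hne
  obtain ⟨i, hi⟩ := Function.ne_iff.mp hne.1
  obtain ⟨k, hk⟩ := Function.ne_iff.mp hne.2
  exact mul_ne_zero hi hk (by rw [entry, huy, zero_mul])

section CommRing
variable (R : Type*) [CommRing R]

/-- The Plücker coordinates of `x ∧ y` as a bilinear map over any commutative ring, in the order
`(p01, p02, p03, p23, p31, p12)`; over `ℝ` this is `pluck` definitionally. -/
def plucker : (Fin 4 → R) →ₗ[R] (Fin 4 → R) →ₗ[R] Fin 6 → R :=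
  LinearMap.mk₂ R
    (fun x y => ![x 0 * y 1 - x 1 * y 0, x 0 * y 2 - x 2 * y 0, x 0 * y 3 - x 3 * y 0,
      x 2 * y 3 - x 3 * y 2, x 3 * y 1 - x 1 * y 3, x 1 * y 2 - x 2 * y 1])
    (fun _ _ _ => by
      ext i; fin_cases i <;>
        simp only [Pi.add_apply, Fin.zero_eta, Fin.mk_one, Fin.reduceFinMk, cons_val] <;> ring)
    (fun _ _ _ => by
      ext i; fin_cases i <;>
        simp only [Pi.smul_apply, smul_eq_mul, Fin.zero_eta, Fin.mk_one, Fin.reduceFinMk,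
          cons_val] <;> ring)
    (fun _ _ _ => by
      ext i; fin_cases i <;>
        simp only [Pi.add_apply, Fin.zero_eta, Fin.mk_one, Fin.reduceFinMk, cons_val] <;> ring)
    (fun _ _ _ => by
      ext i; fin_cases i <;>
        simp only [Pi.smul_apply, smul_eq_mul, Fin.zero_eta, Fin.mk_one, Fin.reduceFinMk,
          cons_val] <;> ring)

/-- The Klein quadratic form `p01*p23 + p02*p31 + p03*p12` over any commutative ring; over `ℝ` this
is `kleinForm` definitionally. -/
def kleinQuadraticForm : QuadraticForm R (Fin 6 → R) :=
  .linMulLin (.proj 0) (.proj 3) + .linMulLin (.proj 1) (.proj 4) + .linMulLin (.proj 2) (.proj 5)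

/-- The Hodge star on Plücker vectors. With the order `(p01, p02, p03, p23, p31, p12)` of the
coordinates it swaps the two halves, that is, it shifts the indices by three. -/
def pluckerDual : (Fin 6 → R) ≃ₗ[R] Fin 6 → R :=
  LinearEquiv.funCongrLeft R R (Equiv.addRight 3)

/-- The skew-symmetric matrix `(p_ij)` of a Plücker vector, where `p_ji = -p_ij`. -/
def pluckerMatrix : (Fin 6 → R) →ₗ[R] Matrix (Fin 4) (Fin 4) R where
  toFun p := !![0, p 0, p 1, p 2; -p 0, 0, p 5, -p 4; -p 1, -p 5, 0, p 3; -p 2, p 4, -p 3, 0]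
  map_add' p q := by ext i j; fin_cases i <;> fin_cases j <;> simp [add_comm]
  map_smul' c p := by ext i j; fin_cases i <;> fin_cases j <;> simp

/-- The skew-symmetric matrix of the Hodge dual of a Plücker vector; a point `y` lies on the
line `p` iff this matrix kills `y`. -/
def dualPluckerMatrix : (Fin 6 → R) →ₗ[R] Matrix (Fin 4) (Fin 4) R :=
  pluckerMatrix R ∘ₗ pluckerDual R

/-- The bundle of lines through the point `y`: the multiples `y ∧ z` of `y`. -/
def bundleOfLines (y : Fin 4 → R) : Submodule R (Fin 6 → R) :=
  LinearMap.range (plucker R y)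

/-- The field of lines in the plane `uᵀx = 0`. It is only a set by definition, because a sum of
decomposable vectors `x ∧ y` is not decomposable in general. -/
def fieldOfLines (u : Fin 4 → R) : Set (Fin 6 → R) :=
  {p | ∃ x y, u ⬝ᵥ x = 0 ∧ u ⬝ᵥ y = 0 ∧ plucker R x y = p}

variable {R}

lemma plucker_apply (x y : Fin 4 → R) :
    plucker R x y = ![x 0 * y 1 - x 1 * y 0, x 0 * y 2 - x 2 * y 0, x 0 * y 3 - x 3 * y 0,
      x 2 * y 3 - x 3 * y 2, x 3 * y 1 - x 1 * y 3, x 1 * y 2 - x 2 * y 1] := rfl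

lemma pluckerDual_apply (p : Fin 6 → R) : pluckerDual R p = ![p 3, p 4, p 5, p 0, p 1, p 2] := by
  ext i; fin_cases i <;> rfl

lemma pluckerDual_pluckerDual (p : Fin 6 → R) : pluckerDual R (pluckerDual R p) = p := by
  ext i; fin_cases i <;> rfl

lemma dualPluckerMatrix_pluckerDual (p : Fin 6 → R) :
    dualPluckerMatrix R (pluckerDual R p) = pluckerMatrix R p :=
  congrArg (pluckerMatrix R) (pluckerDual_pluckerDual p)

lemma kleinQuadraticForm_apply (p : Fin 6 → R) :
    kleinQuadraticForm R p = p 0 * p 3 + p 1 * p 4 + p 2 * p 5 := rfl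

lemma kleinQuadraticForm_pluckerDual (p : Fin 6 → R) :
    kleinQuadraticForm R (pluckerDual R p) = kleinQuadraticForm R p := by
  simp [kleinQuadraticForm_apply, pluckerDual_apply, mul_comm]

lemma pluckerMatrix_apply (p : Fin 6 → R) :
    pluckerMatrix R p =
      !![0, p 0, p 1, p 2; -p 0, 0, p 5, -p 4; -p 1, -p 5, 0, p 3; -p 2, p 4, -p 3, 0] := rfl

lemma dualPluckerMatrix_apply (p : Fin 6 → R) :
    dualPluckerMatrix R p =
      !![0, p 3, p 4, p 5; -p 3, 0, p 2, -p 1; -p 4, -p 2, 0, p 0; -p 5, p 1, -p 0, 0] := rfl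

lemma pluckerMatrix_injective : Function.Injective (pluckerMatrix R) := by
  intro p q h
  have entry (i j) : pluckerMatrix R p i j = pluckerMatrix R q i j := by rw [h]
  ext k
  fin_cases k
  exacts [entry 0 1, entry 0 2, entry 0 3, entry 2 3, entry 3 1, entry 1 2]

lemma dualPluckerMatrix_injective : Function.Injective (dualPluckerMatrix R) :=
  pluckerMatrix_injective.comp (pluckerDual R).injective

lemma transpose_pluckerMatrix (p : Fin 6 → R) : (pluckerMatrix R p)ᵀ = -pluckerMatrix R p := by
  ext i j
  fin_cases i <;> fin_cases j <;> simp [pluckerMatrix_apply]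

lemma pluckerMatrix_plucker (x y : Fin 4 → R) :
    pluckerMatrix R (plucker R x y) = vecMulVec x y - vecMulVec y x := by
  ext i j
  fin_cases i <;> fin_cases j <;>
    simp [pluckerMatrix_apply, plucker_apply, vecMulVec_apply, mul_comm (y _)]

lemma plucker_self (y : Fin 4 → R) : plucker R y y = 0 :=
  pluckerMatrix_injective (by simp [pluckerMatrix_plucker])

lemma pluckerMatrix_plucker_mulVec (u x y : Fin 4 → R) :
    pluckerMatrix R (plucker R x y) *ᵥ u = (u ⬝ᵥ y) • x - (u ⬝ᵥ x) • y := by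
  simp [pluckerMatrix_plucker, sub_mulVec, vecMulVec_mulVec, dotProduct_comm u]

lemma pluckerMatrix_mulVec_eq_zero_of_mem_fieldOfLines {p : Fin 6 → R} {u : Fin 4 → R}
    (hp : p ∈ fieldOfLines R u) : pluckerMatrix R p *ᵥ u = 0 := by
  obtain ⟨x, y, hx, hy, rfl⟩ := hp
  rw [pluckerMatrix_plucker_mulVec, hx, hy, zero_smul, zero_smul, sub_zero]

lemma pluckerMatrix_mul_dualPluckerMatrix (p : Fin 6 → R) :
    pluckerMatrix R p * dualPluckerMatrix R p = -kleinQuadraticForm R p • 1 := by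
  ext i j
  fin_cases i <;> fin_cases j <;>
    simp only [pluckerMatrix_apply, dualPluckerMatrix_apply, kleinQuadraticForm_apply, mul_apply,
      Fin.sum_univ_four, Matrix.smul_apply, one_apply, smul_eq_mul, of_apply, cons_val,
      Fin.zero_eta, Fin.mk_one, Fin.reduceFinMk, Fin.reduceEq, reduceIte] <;>
    ring

lemma dualPluckerMatrix_mul_pluckerMatrix (p : Fin 6 → R) :
    dualPluckerMatrix R p * pluckerMatrix R p = -kleinQuadraticForm R p • 1 := by
  rw [← kleinQuadraticForm_pluckerDual, ← pluckerMatrix_mul_dualPluckerMatrix,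
    dualPluckerMatrix_pluckerDual]
  rfl

lemma dualPluckerMatrix_mulVec (p : Fin 6 → R) (y : Fin 4 → R) :
    dualPluckerMatrix R p *ᵥ y =
      ![p 3 * y 1 + p 4 * y 2 + p 5 * y 3, -p 3 * y 0 + p 2 * y 2 - p 1 * y 3,
        -p 4 * y 0 - p 2 * y 1 + p 0 * y 3, -p 5 * y 0 + p 1 * y 1 - p 0 * y 2] := by
  ext i
  fin_cases i <;> simp [dualPluckerMatrix_apply, mulVec, dotProduct, Fin.sum_univ_four,
    sub_eq_add_neg]

/-- The Leibniz rule for contracting `y ∧ p` with the `i`-th coordinate functional, where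
`M⋆ p *ᵥ y` is the Hodge dual of the trivector `y ∧ p`. -/
lemma smul_eq_plucker_sub (p : Fin 6 → R) (y : Fin 4 → R) (i : Fin 4) :
    y i • p = plucker R y (pluckerMatrix R p i) -
      pluckerDual R (plucker R (Pi.single i 1) (dualPluckerMatrix R p *ᵥ y)) := by
  rw [pluckerDual_apply, dualPluckerMatrix_mulVec]
  ext j
  fin_cases i <;> fin_cases j <;>
    simp only [plucker_apply, pluckerMatrix_apply, of_apply, Pi.smul_apply, Pi.sub_apply,
      Pi.single_apply, smul_eq_mul, cons_val, Fin.zero_eta, Fin.mk_one, Fin.reduceFinMk,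
      Fin.reduceEq, reduceIte] <;>
    ring

lemma smul_eq_plucker_of_mulVec_eq_zero {p : Fin 6 → R} {y : Fin 4 → R}
    (h : dualPluckerMatrix R p *ᵥ y = 0) (i : Fin 4) :
    y i • p = plucker R y (pluckerMatrix R p i) := by
  rw [smul_eq_plucker_sub, h, map_zero, map_zero, sub_zero]

end CommRing

section Field
variable {K : Type*} [Field K]

lemma mem_bundleOfLines_of_mulVec_eq_zero {p : Fin 6 → K} {y : Fin 4 → K}
    (hy : y ≠ 0) (h : dualPluckerMatrix K p *ᵥ y = 0) : p ∈ bundleOfLines K y := by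
  obtain ⟨i, hi⟩ := Function.ne_iff.mp hy
  refine ⟨(y i)⁻¹ • pluckerMatrix K p i, ?_⟩
  rw [map_smul, ← smul_eq_plucker_of_mulVec_eq_zero h, inv_smul_smul₀ hi]

lemma mem_fieldOfLines_of_mulVec_eq_zero {p : Fin 6 → K} {u : Fin 4 → K}
    (hp : kleinQuadraticForm K p = 0) (h : pluckerMatrix K p *ᵥ u = 0) :
    p ∈ fieldOfLines K u := by
  rcases eq_or_ne p 0 with rfl | hp0
  · exact ⟨0, 0, by simp⟩
  obtain ⟨i, j, hij⟩ : ∃ i j, pluckerMatrix K p i j ≠ 0 := by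
    by_contra! hM
    exact hp0 (pluckerMatrix_injective (by ext i j; simp [hM]))
  have row_orthogonal (k) : u ⬝ᵥ pluckerMatrix K p k = 0 := by
    rw [dotProduct_comm]; exact congrFun h k
  have col_eq : (pluckerMatrix K p).col j = -pluckerMatrix K p j :=
    congrFun (transpose_pluckerMatrix p) j
  -- By `M⋆ p * M p = 0`, each column of `M p` is a point of the line `p`.
  have hcol : dualPluckerMatrix K p *ᵥ (pluckerMatrix K p).col j = 0 := by
    rw [← mulVec_single_one, mulVec_mulVec, dualPluckerMatrix_mul_pluckerMatrix, hp,
      neg_zero, zero_smul, zero_mulVec]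
  refine ⟨(pluckerMatrix K p).col j, (pluckerMatrix K p i j)⁻¹ • pluckerMatrix K p i, ?_, ?_, ?_⟩
  · rw [col_eq, dotProduct_neg, row_orthogonal, neg_zero]
  · rw [dotProduct_smul, row_orthogonal, smul_zero]
  · rw [map_smul, ← smul_eq_plucker_of_mulVec_eq_zero hcol, col_apply, inv_smul_smul₀ hij]

lemma finrank_bundleOfLines_le {y : Fin 4 → K} (hy : y ≠ 0) :
    Module.finrank K (bundleOfLines K y) ≤ 3 := by
  have hker : 0 < Module.finrank K (LinearMap.ker (plucker K y)) := by
    have : Nontrivial (LinearMap.ker (plucker K y)) :=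
      ⟨⟨y, plucker_self y⟩, 0, fun h => hy (congrArg Subtype.val h)⟩
    exact Module.finrank_pos
  have hsum : Module.finrank K (bundleOfLines K y) +
      Module.finrank K (LinearMap.ker (plucker K y)) = _ :=
    LinearMap.finrank_range_add_finrank_ker (plucker K y)
  rw [Module.finrank_fin_fun] at hsum
  omega

variable {W : Submodule K (Fin 6 → K)}

theorem eq_bundleOfLines_of_mulVec_eq_zero (hdim : 3 ≤ Module.finrank K W)
    {y : Fin 4 → K} (hy : y ≠ 0)
    (h : ∀ p ∈ W, dualPluckerMatrix K p *ᵥ y = 0) : W = bundleOfLines K y :=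
  Submodule.eq_of_le_of_finrank_le
    (fun p hp => mem_bundleOfLines_of_mulVec_eq_zero hy (h p hp))
    ((finrank_bundleOfLines_le hy).trans hdim)

theorem coe_eq_fieldOfLines_of_mulVec_eq_zero (hdim : 3 ≤ Module.finrank K W)
    (hnull : ∀ p ∈ W, kleinQuadraticForm K p = 0) {u : Fin 4 → K} (hu : u ≠ 0)
    (h : ∀ p ∈ W, pluckerMatrix K p *ᵥ u = 0) :
    (W : Set (Fin 6 → K)) = fieldOfLines K u := by
  have hdual : W.map (pluckerDual K : (Fin 6 → K) →ₗ[K] Fin 6 → K) = bundleOfLines K u := by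
    refine eq_bundleOfLines_of_mulVec_eq_zero ?_ hu ?_
    · rwa [(pluckerDual K).finrank_map_eq W]
    · rintro _ ⟨p, hp, rfl⟩
      exact (congrArg (· *ᵥ u) (dualPluckerMatrix_pluckerDual p)).trans (h p hp)
  refine Set.Subset.antisymm
    (fun p hp => mem_fieldOfLines_of_mulVec_eq_zero (hnull p hp) (h p hp)) ?_
  intro p hp
  have hp_dual : pluckerDual K p ∈ bundleOfLines K u := by
    refine mem_bundleOfLines_of_mulVec_eq_zero hu ?_
    rw [dualPluckerMatrix_pluckerDual, pluckerMatrix_mulVec_eq_zero_of_mem_fieldOfLines hp]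
  rw [← hdual] at hp_dual
  simpa using hp_dual

theorem exists_forall_mulVec_eq_zero (hdim : Module.finrank K W = 3)
    (hnull : ∀ p ∈ W, kleinQuadraticForm K p = 0) :
    (∃ y, y ≠ 0 ∧ ∀ p ∈ W, dualPluckerMatrix K p *ᵥ y = 0) ∨
      ∃ u, u ≠ 0 ∧ ∀ p ∈ W, pluckerMatrix K p *ᵥ u = 0 := by
  let A := (toLin'.toLinearMap ∘ₗ pluckerMatrix K).domRestrict W
  let B := (toLin'.toLinearMap ∘ₗ dualPluckerMatrix K).domRestrict W
  have hAB (p t) : A p (B p t) = 0 := by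
    simp [A, B, mulVec_mulVec, pluckerMatrix_mul_dualPluckerMatrix, hnull p p.2]
  have hBA (p s) : B p (A p s) = 0 := by
    simp [A, B, mulVec_mulVec, dualPluckerMatrix_mul_pluckerMatrix, hnull p p.2]
  have hB : B ≠ 0 := by
    have : Nontrivial W := Module.nontrivial_of_finrank_pos (R := K) (by omega)
    obtain ⟨p, hp⟩ := exists_ne (0 : W)
    intro h
    have hBp : toLin' (dualPluckerMatrix K p) = 0 := LinearMap.congr_fun h p
    rw [toLin'.map_eq_zero_iff, map_eq_zero_iff _ dualPluckerMatrix_injective] at hBp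
    exact hp (Subtype.ext hBp)
  simpa [A, B] using
    exists_ne_zero_forall_apply_eq_zero (Module.finBasisOfFinrankEq K W hdim) hAB hBA hB

theorem not_bundleOfLines_subset_fieldOfLines {y u : Fin 4 → K} (hy : y ≠ 0) (hu : u ≠ 0) :
    ¬ (bundleOfLines K y : Set (Fin 6 → K)) ⊆ fieldOfLines K u := by
  intro hsub
  have hker (z) : pluckerMatrix K (plucker K y z) *ᵥ u = 0 :=
    pluckerMatrix_mulVec_eq_zero_of_mem_fieldOfLines (hsub ⟨z, rfl⟩)
  simp only [pluckerMatrix_plucker_mulVec, sub_eq_zero] at hker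
  exact (eq_zero_or_eq_zero_of_dotProduct_smul_eq hker).elim hu hy

theorem planes_in_quadric_classification_general (W : Submodule K (Fin 6 → K))
    (hdim : Module.finrank K W = 3) (hnull : ∀ p ∈ W, kleinQuadraticForm K p = 0) :
    Xor (∃ y : Fin 4 → K, y ≠ 0 ∧ (W : Set (Fin 6 → K)) = bundleOfLines K y)
      (∃ u : Fin 4 → K, u ≠ 0 ∧ (W : Set (Fin 6 → K)) = fieldOfLines K u) := by
  refine (xor_iff_or_and_not_and _ _).mpr ⟨?_, ?_⟩
  · rcases exists_forall_mulVec_eq_zero hdim hnull with ⟨y, hy, h⟩ | ⟨u, hu, h⟩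
    · exact .inl ⟨y, hy, congrArg _ (eq_bundleOfLines_of_mulVec_eq_zero hdim.ge hy h)⟩
    · exact .inr ⟨u, hu, coe_eq_fieldOfLines_of_mulVec_eq_zero hdim.ge hnull hu h⟩
  · rintro ⟨⟨y, hy, hbundle⟩, ⟨u, hu, hfield⟩⟩
    exact not_bundleOfLines_subset_fieldOfLines hy hu (hbundle.symm.trans hfield).subset

end Field

theorem planes_in_quadric_classification (W : Submodule ℝ (Fin 6 → ℝ))
    (hdim : Module.finrank ℝ W = 3) (hnull : ∀ p ∈ W, kleinForm p = 0) :
    Xor'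
      (∃ y : Fin 4 → ℝ, y ≠ 0 ∧
        (W : Set (Fin 6 → ℝ)) = {p | ∃ z : Fin 4 → ℝ, pluck y z = p})
      (∃ u : Fin 4 → ℝ, u ≠ 0 ∧
        (W : Set (Fin 6 → ℝ)) =
          {p | ∃ x y : Fin 4 → ℝ, u ⬝ᵥ x = 0 ∧ u ⬝ᵥ y = 0 ∧ pluck x y = p}) :=
  planes_in_quadric_classification_general W hdim hnull
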